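/- arXiv:2408.15352 — 2 statements merged into one kernel-verified Lean document; each statement's English description precedes it below -/
import Mathlib

section
/- For every n ≥ 3 and 2 ≤ k ≤ n−1: Q(F_n^k)_M = Q(F_n^{k−1}) and Q(F_n^k)_O = Q(F_n^{k+1}), i.e., Q(F_n^k) − D_M^{Q(F_n^k)} = Q(F_n^{k−1}) and Q(F_n^k) + D_O^{Q(F_n^k)} = Q(F_n^{k+1}) as functions on L_n × L_n. -/
open Finset

/-- An `n×n` matrix encoded as `ℕ → ℕ → ℝ` with indices `1,…,n` and zero entries outside. -/
def IsASM (n : ℕ) (a : ℕ → ℕ → ℝ) : Prop :=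
  (∀ i j, ¬(1 ≤ i ∧ i ≤ n ∧ 1 ≤ j ∧ j ≤ n) → a i j = 0) ∧
  (∀ i j, a i j = -1 ∨ a i j = 0 ∨ a i j = 1) ∧
  (∀ i, 1 ≤ i → i ≤ n → ∑ j ∈ Icc 1 n, a i j = 1) ∧
  (∀ j, 1 ≤ j → j ≤ n → ∑ i ∈ Icc 1 n, a i j = 1) ∧
  (∀ i t, 1 ≤ i → i ≤ n → t ≤ n →
    (∑ j ∈ Icc 1 t, a i j = 0 ∨ ∑ j ∈ Icc 1 t, a i j = 1)) ∧
  (∀ j t, 1 ≤ j → j ≤ n → t ≤ n →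
    (∑ i ∈ Icc 1 t, a i j = 0 ∨ ∑ i ∈ Icc 1 t, a i j = 1))

/-- No zero entry lies between two nonzero entries in any row or column. -/
def IsDense (a : ℕ → ℕ → ℝ) : Prop :=
  (∀ i j₁ j₂ j₃, j₁ < j₂ → j₂ < j₃ → a i j₁ ≠ 0 → a i j₃ ≠ 0 → a i j₂ ≠ 0) ∧
  (∀ j i₁ i₂ i₃, i₁ < i₂ → i₂ < i₃ → a i₁ j ≠ 0 → a i₃ j ≠ 0 → a i₂ j ≠ 0)

/-- A proper ASM contains at least one entry `-1`. -/
def IsProper (a : ℕ → ℕ → ℝ) : Prop := ∃ i j, a i j = -1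

/-- The matrix `F_n^k`. -/
noncomputable def Fmat (n k : ℕ) : ℕ → ℕ → ℝ := fun i j =>
  if k + 1 ≤ i + j ∧ (i : ℤ) + j ≤ 2 * n - k + 1 ∧ |(i : ℤ) - j| ≤ (k : ℤ) - 1
  then (-1 : ℝ) ^ (i + j - k - 1) else 0

/-- The discrete quasi-copula associated with a matrix: `Q(A)(r,s) = Σ_{i≤r} Σ_{j≤s} a_{ij}`. -/
noncomputable def Qmat (a : ℕ → ℕ → ℝ) : ℕ → ℕ → ℝ := fun r s =>
  ∑ i ∈ Icc 1 r, ∑ j ∈ Icc 1 s, a i j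

/-- Volume of the rectangle `[i,j]×[k,l]` with respect to `Q`. -/
def vol (Q : ℕ → ℕ → ℝ) (i j k l : ℕ) : ℝ := Q i k + Q j l - Q i l - Q j k

/-- `D_↘^Q(r,s) = min{0, V_Q([r,r']×[s,s']) : r < r' ≤ n, s < s' ≤ n}`. -/
noncomputable def Dse (n : ℕ) (Q : ℕ → ℕ → ℝ) (r s : ℕ) : ℝ :=
  (Icc (r+1) n ×ˢ Icc (s+1) n).fold min 0 (fun p => vol Q r p.1 s p.2)

/-- `D_↙^Q(r,s) = min{0, V_Q([r,r']×[s',s]) : r < r' ≤ n, 0 ≤ s' < s}`. -/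
noncomputable def Dsw (n : ℕ) (Q : ℕ → ℕ → ℝ) (r s : ℕ) : ℝ :=
  (Icc (r+1) n ×ˢ range s).fold min 0 (fun p => vol Q r p.1 p.2 s)

/-- `D_↖^Q(r,s) = min{0, V_Q([r',r]×[s',s]) : 0 ≤ r' < r, 0 ≤ s' < s}`. -/
noncomputable def Dnw (n : ℕ) (Q : ℕ → ℕ → ℝ) (r s : ℕ) : ℝ :=
  (range r ×ˢ range s).fold min 0 (fun p => vol Q p.1 r p.2 s)

/-- `D_↗^Q(r,s) = min{0, V_Q([r',r]×[s,s']) : 0 ≤ r' < r, s < s' ≤ n}`. -/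
noncomputable def Dne (n : ℕ) (Q : ℕ → ℕ → ℝ) (r s : ℕ) : ℝ :=
  (range r ×ˢ Icc (s+1) n).fold min 0 (fun p => vol Q p.1 r s p.2)

/-- The main defect `D_M^Q`. -/
noncomputable def DM (n : ℕ) (Q : ℕ → ℕ → ℝ) (r s : ℕ) : ℝ :=
  min (Dse n Q r s) (Dnw n Q r s)

/-- The opposite defect `D_O^Q`. -/
noncomputable def DO (n : ℕ) (Q : ℕ → ℕ → ℝ) (r s : ℕ) : ℝ :=
  min (Dsw n Q r s) (Dne n Q r s)

/-- Boundary conditions for a function on `L_n × L_n`. -/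
def DiscBoundary (n : ℕ) (P : ℕ → ℕ → ℝ) : Prop :=
  ∀ i, i ≤ n → P i 0 = 0 ∧ P 0 i = 0 ∧ P i n = i ∧ P n i = i

/-- `(P,Q)` is a discrete imprecise copula on `L_n × L_n`. -/
def DiscImpreciseCopula (n : ℕ) (P Q : ℕ → ℕ → ℝ) : Prop :=
  DiscBoundary n P ∧ DiscBoundary n Q ∧
  ∀ i j k l, i ≤ j → j ≤ n → k ≤ l → l ≤ n →
    0 ≤ Q i k + P j l - P i l - P j k ∧
    0 ≤ P i k + Q j l - P i l - P j k ∧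
    0 ≤ Q i k + Q j l - Q i l - P j k ∧
    0 ≤ Q i k + Q j l - P i l - Q j k

/-- `(P,Q)` is a self-dual discrete imprecise copula: `P_M = Q` and `Q_O = P` on `L_n × L_n`. -/
def SelfDual (n : ℕ) (P Q : ℕ → ℕ → ℝ) : Prop :=
  DiscImpreciseCopula n P Q ∧
  (∀ r, r ≤ n → ∀ s, s ≤ n → P r s - DM n P r s = Q r s) ∧
  (∀ r, r ≤ n → ∀ s, s ≤ n → Q r s + DO n Q r s = P r s)

/-- A discrete quasi-copula (integer-range normalization) on `L_n × L_n`. -/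
def DiscQuasiCopula (n : ℕ) (Q : ℕ → ℕ → ℝ) : Prop :=
  DiscBoundary n Q ∧
  (∀ i i' j, i ≤ i' → i' ≤ n → j ≤ n → Q i j ≤ Q i' j) ∧
  (∀ i j j', j ≤ j' → j' ≤ n → i ≤ n → Q i j ≤ Q i j') ∧
  (∀ i i' j j', i ≤ n → i' ≤ n → j ≤ n → j' ≤ n →
    |Q i j - Q i' j'| ≤ |(i : ℝ) - i'| + |(j : ℝ) - j'|)

/-- A discrete copula: a discrete quasi-copula with all rectangle volumes nonnegative. -/
def DiscCopula (n : ℕ) (Q : ℕ → ℕ → ℝ) : Prop :=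
  DiscQuasiCopula n Q ∧
  ∀ i j k l, i ≤ j → j ≤ n → k ≤ l → l ≤ n → 0 ≤ vol Q i j k l

/-- A permutation matrix encoded as `ℕ → ℕ → ℝ` with indices `1,…,n`. -/
def IsPermMatrix (n : ℕ) (p : ℕ → ℕ → ℝ) : Prop :=
  (∀ i j, ¬(1 ≤ i ∧ i ≤ n ∧ 1 ≤ j ∧ j ≤ n) → p i j = 0) ∧
  (∀ i j, p i j = 0 ∨ p i j = 1) ∧
  (∀ i, 1 ≤ i → i ≤ n → ∑ j ∈ Icc 1 n, p i j = 1) ∧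
  (∀ j, 1 ≤ j → j ≤ n → ∑ i ∈ Icc 1 n, p i j = 1)

/-!
Let `M(r,s) = min(r,s)`, `W(r,s) = max(0, r+s-n)` and `φ_k(r,s) = ⌊(r+s-k+1)/2⌋`. Then `Q(F_n^k)`
is the pointwise median of `W ≤ M` and `φ_k`. A rectangle with a main corner on `M` or an opposite
corner on `W` has nonnegative volume for every quasi-copula. On any other rectangle the volume of
`Q(F_n^k)` is at least that of `φ_k`, hence at least `-1`, and it can equal `-1` only if at both
main corners passing from `k` to `k - 1` raises the median by one. Conversely, a point where the
median is so raised is a corner of a unit cell carrying an entry `-1` of `F_n^k`. This computes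
the main defect. The reflection sending `Q(r,s)` to `r - Q(r, n-s)` exchanges the two defects and
maps `Q(F_n^k)` to `Q(F_n^{n+1-k})`, which gives the opposite defect.
-/

/-! ### Volumes and defects -/

section Defects

variable {n r r' s s' : ℕ} {Q Q' : ℕ → ℕ → ℝ} {c : ℝ}

theorem vol_Qmat_cell (a : ℕ → ℕ → ℝ) (i j : ℕ) :
    vol (Qmat a) i (i + 1) j (j + 1) = a (i + 1) (j + 1) := by
  simp only [vol, Qmat, sum_Icc_succ_top (Nat.le_add_left 1 _), sum_add_distrib]
  ring

theorem eq_of_vol_cell_eq (hleft : ∀ s ≤ n, Q 0 s = Q' 0 s) (hbot : ∀ r ≤ n, Q r 0 = Q' r 0)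
    (hcell : ∀ i < n, ∀ j < n, vol Q i (i + 1) j (j + 1) = vol Q' i (i + 1) j (j + 1))
    (hr : r ≤ n) (hs : s ≤ n) : Q r s = Q' r s := by
  induction r generalizing s with
  | zero => exact hleft s hs
  | succ r ihr =>
    induction s with
    | zero => exact hbot _ hr
    | succ s ihs =>
      have hvol := hcell r hr s hs
      unfold vol at hvol
      linarith [ihr (by omega) hs, ihr (by omega) (Nat.le_of_succ_le hs), ihs (by omega)]

theorem le_DM_iff : c ≤ DM n Q r s ↔ c ≤ 0 ∧
    (∀ r' s', r < r' → r' ≤ n → s < s' → s' ≤ n → c ≤ vol Q r r' s s') ∧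
    (∀ r' < r, ∀ s' < s, c ≤ vol Q r' r s' s) := by
  simp only [DM, Dse, Dnw, le_min_iff, le_fold_min, mem_product, mem_Icc, mem_range, Prod.forall,
    Nat.succ_le_iff, and_imp]
  tauto

theorem le_DO_iff : c ≤ DO n Q r s ↔ c ≤ 0 ∧
    (∀ r' s', r < r' → r' ≤ n → s' < s → c ≤ vol Q r r' s' s) ∧
    (∀ r' < r, ∀ s', s < s' → s' ≤ n → c ≤ vol Q r' r s s') := by
  simp only [DO, Dsw, Dne, le_min_iff, le_fold_min, mem_product, mem_Icc, mem_range, Prod.forall,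
    Nat.succ_le_iff, and_imp]
  tauto

theorem DM_nonpos : DM n Q r s ≤ 0 := (le_DM_iff.mp le_rfl).1

theorem DM_le_vol_succ (hr : r < n) (hs : s < n) : DM n Q r s ≤ vol Q r (r + 1) s (s + 1) :=
  (le_DM_iff.mp le_rfl).2.1 _ _ r.lt_succ_self hr s.lt_succ_self hs

theorem DM_succ_le_vol : DM n Q (r + 1) (s + 1) ≤ vol Q r (r + 1) s (s + 1) :=
  (le_DM_iff.mp le_rfl).2.2 _ r.lt_succ_self _ s.lt_succ_self

theorem vol_congr (h : ∀ r ≤ n, ∀ s ≤ n, Q r s = Q' r s) (hr : r ≤ n) (hr' : r' ≤ n)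
    (hs : s ≤ n) (hs' : s' ≤ n) : vol Q r r' s s' = vol Q' r r' s s' := by
  rw [vol, vol, h r hr s hs, h r' hr' s' hs', h r hr s' hs', h r' hr' s hs]

theorem DM_congr (h : ∀ r ≤ n, ∀ s ≤ n, Q r s = Q' r s) (hr : r ≤ n) (hs : s ≤ n) :
    DM n Q r s = DM n Q' r s := by
  unfold DM Dse Dnw
  congr 1 <;> refine fold_congr fun p hp ↦ ?_ <;>
    simp only [mem_product, mem_Icc, mem_range] at hp
  · exact vol_congr h hr (by omega) hs (by omega)
  · exact vol_congr h (by omega) hr (by omega) hs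

/-- The reflection `Q^σ(r,s) = r - Q(r, n-s)` of a function on `L_n × L_n` in its second variable;
it is meaningful only for `s ≤ n`, where the subtraction `n - s` is not truncated. -/
def reflect (n : ℕ) (Q : ℕ → ℕ → ℝ) (r s : ℕ) : ℝ := r - Q r (n - s)

theorem vol_reflect (hs : s ≤ n) (hs' : s' ≤ n) :
    vol (reflect n Q) r r' (n - s') (n - s) = vol Q r r' s s' := by
  simp only [vol, reflect, Nat.sub_sub_self hs, Nat.sub_sub_self hs']
  ring

theorem DM_reflect (hs : s ≤ n) : DM n (reflect n Q) r (n - s) = DO n Q r s := by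
  refine eq_of_forall_le_iff fun c ↦ ?_
  rw [le_DM_iff, le_DO_iff]
  refine and_congr_right' (and_congr ⟨fun h r' s' hr hr' hs' ↦ ?_, fun h r' t hr hr' ht ht' ↦ ?_⟩
    ⟨fun h r' hr s' hs' hn ↦ ?_, fun h r' hr t ht ↦ ?_⟩)
  · rw [← vol_reflect (hs'.le.trans hs) hs]
    exact h r' (n - s') hr hr' (by omega) (Nat.sub_le n s')
  · rw [← Nat.sub_sub_self ht', vol_reflect (Nat.sub_le n t) hs]
    exact h r' (n - t) hr hr' (by omega)
  · rw [← vol_reflect hs hn]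
    exact h r' hr (n - s') (by omega)
  · have htn : t ≤ n := by omega
    rw [← Nat.sub_sub_self htn, vol_reflect hs (Nat.sub_le n t)]
    exact h r' hr (n - t) (by omega) (Nat.sub_le n t)

end Defects

/-! ### Quasi-copulas -/

namespace DiscQuasiCopula

variable {n r r' s s' : ℕ} {Q : ℕ → ℕ → ℝ}

theorem mono_left (hQ : DiscQuasiCopula n Q) (hr : r ≤ r') (hr' : r' ≤ n) (hs : s ≤ n) :
    Q r s ≤ Q r' s := hQ.2.1 r r' s hr hr' hs

theorem mono_right (hQ : DiscQuasiCopula n Q) (hs : s ≤ s') (hs' : s' ≤ n) (hr : r ≤ n) :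
    Q r s ≤ Q r s' := hQ.2.2.1 r s s' hs hs' hr

theorem le_add_left (hQ : DiscQuasiCopula n Q) (hr : r ≤ r') (hr' : r' ≤ n) (hs : s ≤ n) :
    Q r' s ≤ Q r s + (r' - r) := by
  have h := hQ.2.2.2 r' r s s hr' (hr.trans hr') hs hs
  rw [sub_self, abs_zero, add_zero, abs_of_nonneg (sub_nonneg.mpr (Nat.cast_le.mpr hr))] at h
  linarith [le_abs_self (Q r' s - Q r s)]

theorem le_add_right (hQ : DiscQuasiCopula n Q) (hs : s ≤ s') (hs' : s' ≤ n) (hr : r ≤ n) :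
    Q r s' ≤ Q r s + (s' - s) := by
  have h := hQ.2.2.2 r r s' s hr hr hs' (hs.trans hs')
  rw [sub_self, abs_zero, zero_add, abs_of_nonneg (sub_nonneg.mpr (Nat.cast_le.mpr hs))] at h
  linarith [le_abs_self (Q r s' - Q r s)]

theorem apply_le_min (hQ : DiscQuasiCopula n Q) (hr : r ≤ n) (hs : s ≤ n) :
    Q r s ≤ min (r : ℝ) s :=
  le_min ((hQ.mono_right hs le_rfl hr).trans_eq (hQ.1 r hr).2.2.1)
    ((hQ.mono_left hr le_rfl hs).trans_eq (hQ.1 s hs).2.2.2)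

theorem max_le_apply (hQ : DiscQuasiCopula n Q) (hr : r ≤ n) (hs : s ≤ n) :
    max 0 ((r : ℝ) + s - n) ≤ Q r s := by
  refine max_le ((hQ.1 r hr).1.symm.trans_le (hQ.mono_right s.zero_le hs hr)) ?_
  linarith [hQ.le_add_left hr le_rfl hs, (hQ.1 s hs).2.2.2]

theorem vol_nonneg_of_eq_min_nw (hQ : DiscQuasiCopula n Q) (hr : r ≤ r') (hr' : r' ≤ n)
    (hs : s ≤ s') (hs' : s' ≤ n) (h : Q r s = min (r : ℝ) s) : 0 ≤ vol Q r r' s s' := by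
  have hleft := hQ.mono_left hr hr' hs'
  have hright := hQ.mono_right hs hs' hr'
  have hne := le_min_iff.mp (hQ.apply_le_min (hr.trans hr') hs')
  have hsw := le_min_iff.mp (hQ.apply_le_min hr' (hs.trans hs'))
  unfold vol
  rcases min_choice (r : ℝ) s with hmin | hmin <;> rw [hmin] at h <;> linarith

theorem vol_nonneg_of_eq_min_se (hQ : DiscQuasiCopula n Q) (hr : r ≤ r') (hr' : r' ≤ n)
    (hs : s ≤ s') (hs' : s' ≤ n) (h : Q r' s' = min (r' : ℝ) s') : 0 ≤ vol Q r r' s s' := by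
  have hleft := hQ.le_add_left hr hr' (hs.trans hs')
  have hright := hQ.le_add_right hs hs' (hr.trans hr')
  have hne := le_min_iff.mp (hQ.apply_le_min (hr.trans hr') hs')
  have hsw := le_min_iff.mp (hQ.apply_le_min hr' (hs.trans hs'))
  unfold vol
  rcases min_choice (r' : ℝ) s' with hmin | hmin <;> rw [hmin] at h <;> linarith

theorem vol_nonneg_of_eq_max_ne (hQ : DiscQuasiCopula n Q) (hr : r ≤ r') (hr' : r' ≤ n)
    (hs : s ≤ s') (hs' : s' ≤ n) (h : Q r s' = max 0 ((r : ℝ) + s' - n)) :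
    0 ≤ vol Q r r' s s' := by
  have hright := hQ.mono_right hs hs' hr'
  have hleft := hQ.le_add_left hr hr' (hs.trans hs')
  have hnw := max_le_iff.mp (hQ.max_le_apply (hr.trans hr') (hs.trans hs'))
  have hse := max_le_iff.mp (hQ.max_le_apply hr' hs')
  unfold vol
  rcases max_choice 0 ((r : ℝ) + s' - n) with hmax | hmax <;> rw [hmax] at h <;> linarith

theorem vol_nonneg_of_eq_max_sw (hQ : DiscQuasiCopula n Q) (hr : r ≤ r') (hr' : r' ≤ n)
    (hs : s ≤ s') (hs' : s' ≤ n) (h : Q r' s = max 0 ((r' : ℝ) + s - n)) :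
    0 ≤ vol Q r r' s s' := by
  have hleft := hQ.mono_left hr hr' hs'
  have hright := hQ.le_add_right hs hs' (hr.trans hr')
  have hnw := max_le_iff.mp (hQ.max_le_apply (hr.trans hr') (hs.trans hs'))
  have hse := max_le_iff.mp (hQ.max_le_apply hr' hs')
  unfold vol
  rcases max_choice 0 ((r' : ℝ) + s - n) with hmax | hmax <;> rw [hmax] at h <;> linarith

end DiscQuasiCopula

/-! ### The quasi-copulas `Q(F_n^k)` -/

section Fmat

variable {n k i j r r' s s' : ℕ}

theorem Fmat_apply (n k i j : ℕ) :
    Fmat n k i j = if k + 1 ≤ i + j ∧ i + j + k ≤ 2 * n + 1 ∧ i < j + k ∧ j < i + k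
      then (-1) ^ (i + j - k - 1) else 0 := by
  unfold Fmat
  congr 1
  rw [abs_le, eq_iff_iff]
  omega

/-- The closed form of `Q(F_n^k)(r,s)`: the median of `max(0, r+s-n)`, `min(r,s)` and
`⌊(r+s-k+1)/2⌋`. It is integer-valued so that the last term can be a floor division. -/
def medianQ (n k r s : ℕ) : ℤ :=
  max (max 0 ((r : ℤ) + s - n)) (min (min (r : ℤ) s) (((r : ℤ) + s - k + 1) / 2))

theorem medianQ_eq_half (h : k ≤ r + s + 1) (h' : r + s + k ≤ 2 * n + 1) (hr : r ≤ s + k)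
    (hs : s ≤ r + k) : medianQ n k r s = (r + s - k + 1) / 2 := by
  unfold medianQ; omega

theorem medianQ_eq_zero (hk : k ≤ n) (h : r + s ≤ k) : medianQ n k r s = 0 := by
  unfold medianQ; omega

theorem medianQ_eq_add_sub (hk : k ≤ n) (h : 2 * n ≤ r + s + k) :
    medianQ n k r s = r + s - n := by
  unfold medianQ; omega

theorem medianQ_eq_left (hk : 1 ≤ k) (hs : s ≤ n) (h : r + k ≤ s + 1) : medianQ n k r s = r := by
  unfold medianQ; omega

theorem medianQ_eq_right (hk : 1 ≤ k) (hr : r ≤ n) (h : s + k ≤ r + 1) : medianQ n k r s = s := by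
  unfold medianQ; omega

theorem medianQ_zero_left (k : ℕ) (hs : s ≤ n) : medianQ n k 0 s = 0 := by
  unfold medianQ; omega

theorem medianQ_zero_right (k : ℕ) (hr : r ≤ n) : medianQ n k r 0 = 0 := by
  unfold medianQ; omega

theorem medianQ_top_left (n k s : ℕ) : medianQ n k n s = s := by
  unfold medianQ; omega

theorem medianQ_top_right (n k r : ℕ) : medianQ n k r n = r := by
  unfold medianQ; omega

theorem medianQ_mono (n k : ℕ) (hr : r ≤ r') (hs : s ≤ s') :
    medianQ n k r s ≤ medianQ n k r' s' := by
  unfold medianQ; omega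

theorem medianQ_sub_le (n k r r' s s' : ℕ) :
    medianQ n k r s - medianQ n k r' s' ≤ |(r : ℤ) - r'| + |(s : ℤ) - s'| := by
  have hr := abs_le.mp (le_refl |(r : ℤ) - r'|)
  have hs := abs_le.mp (le_refl |(s : ℤ) - s'|)
  unfold medianQ; omega

theorem half_le_medianQ (hr : r ≤ n) (hs : s ≤ n) (h : medianQ n k r s ≠ min (r : ℤ) s) :
    ((r : ℤ) + s - k + 1) / 2 ≤ medianQ n k r s := by
  unfold medianQ at *; omega

theorem medianQ_le_half (h : medianQ n k r s ≠ max 0 ((r : ℤ) + s - n)) :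
    medianQ n k r s ≤ ((r : ℤ) + s - k + 1) / 2 := by
  unfold medianQ at *; omega

theorem medianQ_le_pred (n k r s : ℕ) : medianQ n k r s ≤ medianQ n (k - 1) r s := by
  unfold medianQ; omega

theorem medianQ_pred_le_add_one (n k r s : ℕ) :
    medianQ n (k - 1) r s ≤ medianQ n k r s + 1 := by
  unfold medianQ; omega

theorem medianQ_pred_eq_add_one (hr : r ≤ n) (hs : s ≤ n)
    (hmin : medianQ n k r s ≠ min (r : ℤ) s) (h : 2 * medianQ n k r s = r + s - k) :
    medianQ n (k - 1) r s = medianQ n k r s + 1 := by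
  unfold medianQ at *; omega

theorem medianQ_reflect (hk : k ≤ n + 1) (hr : r ≤ n) (hs : s ≤ n) :
    medianQ n (n + 1 - k) r (n - s) = r - medianQ n k r s := by
  unfold medianQ; omega

theorem medianQ_cell_of_mem (h : k ≤ i + j + 1) (h' : i + j + k + 1 ≤ 2 * n)
    (hi : i < j + k) (hj : j < i + k) :
    medianQ n k i j + medianQ n k (i + 1) (j + 1) - medianQ n k i (j + 1) - medianQ n k (i + 1) j =
      (-1) ^ (i + 1 + (j + 1) - k - 1) := by
  iterate 4 rw [medianQ_eq_half (by omega) (by omega) (by omega) (by omega)]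
  rcases Nat.even_or_odd (i + 1 + (j + 1) - k - 1) with hpar | hpar <;>
    rw [hpar.neg_one_pow] <;> grind

theorem medianQ_cell_of_notMem (hk : 1 ≤ k) (hkn : k ≤ n) (hi : i < n) (hj : j < n)
    (h : i + j + 2 ≤ k ∨ 2 * n ≤ i + j + k ∨ i + k ≤ j ∨ j + k ≤ i) :
    medianQ n k i j + medianQ n k (i + 1) (j + 1) - medianQ n k i (j + 1) - medianQ n k (i + 1) j =
      0 := by
  rcases h with h | h | h | h
  · iterate 4 rw [medianQ_eq_zero hkn (by omega)]
    rfl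
  · iterate 4 rw [medianQ_eq_add_sub hkn (by omega)]
    push_cast; ring
  · iterate 4 rw [medianQ_eq_left hk (by omega) (by omega)]
    ring
  · iterate 4 rw [medianQ_eq_right hk (by omega) (by omega)]
    ring

theorem vol_medianQ_cell (hk : 1 ≤ k) (hkn : k ≤ n) (hi : i < n) (hj : j < n) :
    vol (fun r s ↦ (medianQ n k r s : ℝ)) i (i + 1) j (j + 1) = Fmat n k (i + 1) (j + 1) := by
  rw [Fmat_apply, vol]
  split_ifs with h
  · exact_mod_cast medianQ_cell_of_mem (by omega) (by omega) (by omega) (by omega)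
  · exact_mod_cast medianQ_cell_of_notMem hk hkn hi hj (by omega)

theorem Qmat_Fmat (hk : 1 ≤ k) (hkn : k ≤ n) (hr : r ≤ n) (hs : s ≤ n) :
    Qmat (Fmat n k) r s = medianQ n k r s := by
  refine eq_of_vol_cell_eq (Q' := fun r s ↦ medianQ n k r s) (fun s hs ↦ ?_) (fun r hr ↦ ?_)
    (fun i hi j hj ↦ ?_) hr hs
  · simp [Qmat, medianQ_zero_left k hs]
  · simp [Qmat, medianQ_zero_right k hr]
  · rw [vol_Qmat_cell, vol_medianQ_cell hk hkn hi hj]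

theorem discQuasiCopula_Qmat_Fmat (hk : 1 ≤ k) (hkn : k ≤ n) :
    DiscQuasiCopula n (Qmat (Fmat n k)) := by
  refine ⟨fun i hi ↦ ⟨?_, ?_, ?_, ?_⟩, fun i i' j hi hi' hj ↦ ?_, fun i j j' hj hj' hi ↦ ?_,
    fun i i' j j' hi hi' hj hj' ↦ ?_⟩
  · rw [Qmat_Fmat hk hkn hi n.zero_le, medianQ_zero_right k hi, Int.cast_zero]
  · rw [Qmat_Fmat hk hkn n.zero_le hi, medianQ_zero_left k hi, Int.cast_zero]
  · rw [Qmat_Fmat hk hkn hi le_rfl, medianQ_top_right n k i, Int.cast_natCast]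
  · rw [Qmat_Fmat hk hkn le_rfl hi, medianQ_top_left n k i, Int.cast_natCast]
  · rw [Qmat_Fmat hk hkn (hi.trans hi') hj, Qmat_Fmat hk hkn hi' hj, Int.cast_le]
    exact medianQ_mono n k hi le_rfl
  · rw [Qmat_Fmat hk hkn hi (hj.trans hj'), Qmat_Fmat hk hkn hi hj', Int.cast_le]
    exact medianQ_mono n k le_rfl hj
  · rw [Qmat_Fmat hk hkn hi hj, Qmat_Fmat hk hkn hi' hj', abs_sub_le_iff]
    refine ⟨mod_cast medianQ_sub_le n k i i' j j', ?_⟩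
    rw [abs_sub_comm (i : ℝ), abs_sub_comm (j : ℝ)]
    exact_mod_cast medianQ_sub_le n k i' i j' j

theorem vol_Qmat_Fmat (hk : 1 ≤ k) (hkn : k ≤ n) (hr : r ≤ r') (hr' : r' ≤ n) (hs : s ≤ s')
    (hs' : s' ≤ n) : vol (Qmat (Fmat n k)) r r' s s' =
      (medianQ n k r s + medianQ n k r' s' - medianQ n k r s' - medianQ n k r' s : ℤ) := by
  rw [vol, Qmat_Fmat hk hkn (hr.trans hr') (hs.trans hs'), Qmat_Fmat hk hkn hr' hs',
    Qmat_Fmat hk hkn (hr.trans hr') hs', Qmat_Fmat hk hkn hr' (hs.trans hs')]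
  push_cast
  rfl

theorem vol_Qmat_Fmat_eq_neg_one_of_neg (hk : 1 ≤ k) (hkn : k ≤ n) (hr : r ≤ r') (hr' : r' ≤ n)
    (hs : s ≤ s') (hs' : s' ≤ n) (hneg : vol (Qmat (Fmat n k)) r r' s s' < 0) :
    vol (Qmat (Fmat n k)) r r' s s' = -1 ∧
      medianQ n (k - 1) r s = medianQ n k r s + 1 ∧
      medianQ n (k - 1) r' s' = medianQ n k r' s' + 1 := by
  have hQ := discQuasiCopula_Qmat_Fmat hk hkn
  have hrn := hr.trans hr'
  have hsn := hs.trans hs'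
  have hnw : medianQ n k r s ≠ min (r : ℤ) s := fun h ↦ hneg.not_ge <|
    hQ.vol_nonneg_of_eq_min_nw hr hr' hs hs' <| by rw [Qmat_Fmat hk hkn hrn hsn, h]; push_cast; rfl
  have hse : medianQ n k r' s' ≠ min (r' : ℤ) s' := fun h ↦ hneg.not_ge <|
    hQ.vol_nonneg_of_eq_min_se hr hr' hs hs' <| by rw [Qmat_Fmat hk hkn hr' hs', h]; push_cast; rfl
  have hne : medianQ n k r s' ≠ max 0 ((r : ℤ) + s' - n) := fun h ↦ hneg.not_ge <|
    hQ.vol_nonneg_of_eq_max_ne hr hr' hs hs' <| by rw [Qmat_Fmat hk hkn hrn hs', h]; push_cast; rfl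
  have hsw : medianQ n k r' s ≠ max 0 ((r' : ℤ) + s - n) := fun h ↦ hneg.not_ge <|
    hQ.vol_nonneg_of_eq_max_sw hr hr' hs hs' <| by rw [Qmat_Fmat hk hkn hr' hsn, h]; push_cast; rfl
  have hnw' := half_le_medianQ hrn hsn hnw
  have hse' := half_le_medianQ hr' hs' hse
  have hne' := medianQ_le_half hne
  have hsw' := medianQ_le_half hsw
  rw [vol_Qmat_Fmat hk hkn hr hr' hs hs'] at hneg ⊢
  norm_cast at hneg ⊢
  exact ⟨by omega, medianQ_pred_eq_add_one hrn hsn hnw (by omega),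
    medianQ_pred_eq_add_one hr' hs' hse (by omega)⟩

theorem medianQ_sub_pred_le_vol_nw (hk : 1 ≤ k) (hkn : k ≤ n) (hr : r ≤ r') (hr' : r' ≤ n)
    (hs : s ≤ s') (hs' : s' ≤ n) :
    ((medianQ n k r s - medianQ n (k - 1) r s : ℤ) : ℝ) ≤ vol (Qmat (Fmat n k)) r r' s s' := by
  rcases le_or_gt 0 (vol (Qmat (Fmat n k)) r r' s s') with hnonneg | hneg
  · exact le_trans (mod_cast sub_nonpos.mpr (medianQ_le_pred n k r s)) hnonneg
  · obtain ⟨hvol, hcorner, -⟩ := vol_Qmat_Fmat_eq_neg_one_of_neg hk hkn hr hr' hs hs' hneg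
    simp [hvol, hcorner]

theorem medianQ_sub_pred_le_vol_se (hk : 1 ≤ k) (hkn : k ≤ n) (hr : r ≤ r') (hr' : r' ≤ n)
    (hs : s ≤ s') (hs' : s' ≤ n) :
    ((medianQ n k r' s' - medianQ n (k - 1) r' s' : ℤ) : ℝ) ≤ vol (Qmat (Fmat n k)) r r' s s' := by
  rcases le_or_gt 0 (vol (Qmat (Fmat n k)) r r' s s') with hnonneg | hneg
  · exact le_trans (mod_cast sub_nonpos.mpr (medianQ_le_pred n k r' s')) hnonneg
  · obtain ⟨hvol, -, hcorner⟩ := vol_Qmat_Fmat_eq_neg_one_of_neg hk hkn hr hr' hs hs' hneg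
    simp [hvol, hcorner]

theorem Fmat_eq_neg_one (h : k + 1 ≤ i + j) (h' : i + j + k ≤ 2 * n + 1) (hi : i < j + k)
    (hj : j < i + k) (heven : Even (i + j + k)) : Fmat n k i j = -1 := by
  rw [Fmat_apply, if_pos ⟨h, h', hi, hj⟩, Odd.neg_one_pow]
  grind

theorem exists_Fmat_eq_neg_one (hkn : k < n)
    (h : medianQ n k r s < medianQ n (k - 1) r s) :
    (r < n ∧ s < n ∧ Fmat n k (r + 1) (s + 1) = -1) ∨ (0 < r ∧ 0 < s ∧ Fmat n k r s = -1) := by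
  obtain ⟨hpar, hk', hn', hr', hs'⟩ : (r + s + k) % 2 = 0 ∧ k ≤ r + s ∧ r + s + k ≤ 2 * n ∧
      r + 2 ≤ s + k ∧ s + 2 ≤ r + k := by
    unfold medianQ at h; omega
  rcases hk'.eq_or_lt with heq | hlt
  · exact .inl ⟨by omega, by omega, Fmat_eq_neg_one (by omega) (by omega) (by omega) (by omega)
      (Nat.even_iff.mpr (by omega))⟩
  · exact .inr ⟨by omega, by omega, Fmat_eq_neg_one (by omega) (by omega) (by omega) (by omega)
      (Nat.even_iff.mpr hpar)⟩

theorem DM_Qmat_Fmat (hk : 1 ≤ k) (hkn : k < n) (hr : r ≤ n) (hs : s ≤ n) :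
    DM n (Qmat (Fmat n k)) r s = (medianQ n k r s - medianQ n (k - 1) r s : ℤ) := by
  have hle := medianQ_le_pred n k r s
  apply le_antisymm
  · rcases hle.eq_or_lt with heq | hlt
    · rw [heq, sub_self, Int.cast_zero]
      exact DM_nonpos
    · have hdefect : medianQ n k r s - medianQ n (k - 1) r s = -1 := by
        linarith [medianQ_pred_le_add_one n k r s]
      rw [hdefect, Int.cast_neg, Int.cast_one]
      rcases exists_Fmat_eq_neg_one hkn hlt with ⟨hrn, hsn, hcell⟩ | ⟨hr0, hs0, hcell⟩
      · exact (DM_le_vol_succ hrn hsn).trans_eq ((vol_Qmat_cell _ r s).trans hcell)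
      · obtain ⟨r, rfl⟩ := Nat.exists_eq_add_one.mpr hr0
        obtain ⟨s, rfl⟩ := Nat.exists_eq_add_one.mpr hs0
        exact DM_succ_le_vol.trans_eq ((vol_Qmat_cell _ r s).trans hcell)
  · exact le_DM_iff.mpr ⟨mod_cast sub_nonpos.mpr hle,
      fun r' s' hr' hr'n hs' hs'n ↦
        medianQ_sub_pred_le_vol_nw hk hkn.le hr'.le hr'n hs'.le hs'n,
      fun r' hr' s' hs' ↦ medianQ_sub_pred_le_vol_se hk hkn.le hr'.le hr hs'.le hs⟩

theorem Qmat_Fmat_sub_DM (hk : 2 ≤ k) (hkn : k < n) (hr : r ≤ n) (hs : s ≤ n) :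
    Qmat (Fmat n k) r s - DM n (Qmat (Fmat n k)) r s = Qmat (Fmat n (k - 1)) r s := by
  rw [DM_Qmat_Fmat (by omega) hkn hr hs, Qmat_Fmat (by omega) hkn.le hr hs,
    Qmat_Fmat (by omega) (by omega) hr hs, Int.cast_sub, sub_sub_cancel]

theorem reflect_Qmat_Fmat (hk : 1 ≤ k) (hkn : k ≤ n) (hr : r ≤ n) (hs : s ≤ n) :
    reflect n (Qmat (Fmat n k)) r s = Qmat (Fmat n (n + 1 - k)) r s := by
  have h := medianQ_reflect (k := k) (by omega) hr (Nat.sub_le n s)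
  rw [Nat.sub_sub_self hs] at h
  rw [reflect, Qmat_Fmat hk hkn hr (Nat.sub_le n s), Qmat_Fmat (by omega) (by omega) hr hs, h,
    Int.cast_sub, Int.cast_natCast]

theorem Qmat_Fmat_add_DO (hk : 2 ≤ k) (hkn : k < n) (hr : r ≤ n) (hs : s ≤ n) :
    Qmat (Fmat n k) r s + DO n (Qmat (Fmat n k)) r s = Qmat (Fmat n (k + 1)) r s := by
  have hs' := Nat.sub_le n s
  have hreflect {l : ℕ} (hl : 1 ≤ l) (hln : l ≤ n) :
      Qmat (Fmat n (n + 1 - l)) r (n - s) = r - Qmat (Fmat n l) r s := by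
    rw [← reflect_Qmat_Fmat hl hln hr hs', reflect, Nat.sub_sub_self hs]
  have hDM : DM n (Qmat (Fmat n (n + 1 - k))) r (n - s) = DO n (Qmat (Fmat n k)) r s := by
    rw [← DM_reflect hs]
    exact DM_congr (fun a ha b hb ↦ (reflect_Qmat_Fmat (by omega) hkn.le ha hb).symm) hr hs'
  have hmain := Qmat_Fmat_sub_DM (k := n + 1 - k) (by omega) (by omega) hr hs'
  rw [hDM, hreflect (by omega) hkn.le, show n + 1 - k - 1 = n + 1 - (k + 1) by omega,
    hreflect (by omega) hkn] at hmain
  linarith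

end Fmat

/-- For every `n ≥ 3` and `2 ≤ k ≤ n−1`,
`Q(F_n^k)_M = Q(F_n^{k−1})` and `Q(F_n^k)_O = Q(F_n^{k+1})` on `L_n × L_n`. -/
theorem QFk_M_and_O (n k : ℕ) (hn : 3 ≤ n) (hk1 : 2 ≤ k) (hk2 : k ≤ n - 1) :
    ∀ r s, r ≤ n → s ≤ n →
      Qmat (Fmat n k) r s - DM n (Qmat (Fmat n k)) r s = Qmat (Fmat n (k - 1)) r s ∧
      Qmat (Fmat n k) r s + DO n (Qmat (Fmat n k)) r s = Qmat (Fmat n (k + 1)) r s := by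
  intro r s hr hs
  have hkn : k < n := by omega
  exact ⟨Qmat_Fmat_sub_DM hk1 hkn hr hs, Qmat_Fmat_add_DO hk1 hkn hr hs⟩
end

section
/- For every n ≥ 7, there exist three discrete copulas C₁, C₂, C₃ such that for all (r,s) ∈ L_n × L_n, Q(A_n)(r,s) = min{C₁(r,s), C₂(r,s), C₃(r,s)} and Q(B_n)(r,s) = max{C₁(r,s), C₂(r,s), C₃(r,s)}. Consequently, the imprecise copula (Q(A_n), Q(B_n)) avoids sure loss and is coherent: for every (r,s) ∈ L_n × L_n, Q(A_n)(r,s) is the infimum and Q(B_n)(r,s) the supremum of C(r,s) over all discrete copulas C with Q(A_n) ≤ C ≤ Q(B_n) pointwise. -/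
open Finset

/-- The matrix `A_n` of Section 5 (non-dense construction), `n ≥ 7`. -/
noncomputable def Amat (n : ℕ) : ℕ → ℕ → ℝ := fun r c =>
  if r + c = n ∧ 1 ≤ c ∧ c ≤ n - 1 then 1
  else if r + c = n + 2 ∧ 3 ≤ c ∧ c ≤ n - 1 then -1
  else if r + c = n + 3 ∧ 3 ≤ c ∧ c ≤ n then 1
  else 0

/-- The matrix `B_n` of Section 5 (non-dense construction), `n ≥ 7`. -/
noncomputable def Bmat (n : ℕ) : ℕ → ℕ → ℝ := fun r c =>
  if r + c = n - 1 ∧ 1 ≤ c ∧ c ≤ n - 2 then 1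
  else if r + c = n + 1 ∧ 3 ≤ c ∧ c ≤ n - 2 then -1
  else if r + c = n + 2 ∧ 3 ≤ c ∧ c ≤ n - 1 then 1
  else if r + c = n + 4 ∧ 5 ≤ c ∧ c ≤ n - 1 then -1
  else if r + c = n + 5 ∧ 5 ≤ c ∧ c ≤ n then 1
  else 0

/-! Put `d = r + s - n`. Up to capping by `min(r, s)`, both `Q(A_n)` and `Q(B_n)` depend on `d`
alone: they are levels `0` and `2` of a family `profile i d` that increases with `i`. A level
exceeds `max(0, d)` near `d = 0`, so it is not convex in `d`, and its concave points carry negative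
mass. Raising the level by one modulo `3` from each column to the next removes them: every unit cell
of `min(r, s, profile ((s + k) mod 3) d)` has nonnegative volume. At a fixed `(r, s)` the shifts
`k = 0, 1, 2` run through all three levels, so these three copulas have pointwise minimum `Q(A_n)`
and pointwise maximum `Q(B_n)`. -/

theorem vol_swap (Q : ℕ → ℕ → ℝ) (i j k l : ℕ) :
    vol (Function.swap Q) i j k l = vol Q k l i j := by
  simp only [vol, Function.swap]
  ring

theorem vol_nonneg_of_unit {n : ℕ} {Q : ℕ → ℕ → ℝ}
    (hunit : ∀ r s, r < n → s < n → 0 ≤ vol Q r (r + 1) s (s + 1)) {i j k l : ℕ}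
    (hij : i ≤ j) (hj : j ≤ n) (hkl : k ≤ l) (hl : l ≤ n) : 0 ≤ vol Q i j k l := by
  have strip : ∀ r < n, 0 ≤ vol Q r (r + 1) k l := by
    intro r hr
    induction l, hkl using Nat.le_induction with
    | base => simp [vol]
    | succ l _ ih =>
      have split : vol Q r (r + 1) k (l + 1)
          = vol Q r (r + 1) k l + vol Q r (r + 1) l (l + 1) := by
        unfold vol
        ring
      exact split ▸ add_nonneg (ih (by omega)) (hunit r l hr hl)
  induction j, hij using Nat.le_induction with
  | base => simp [vol]
  | succ j _ ih =>
    have split : vol Q i (j + 1) k l = vol Q i j k l + vol Q j (j + 1) k l := by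
      unfold vol
      ring
    exact split ▸ add_nonneg (ih (by omega)) (strip j hj)

/-- The 2-increasing property on `L_n × L_n`: no rectangle has negative volume. -/
def TwoIncreasing (n : ℕ) (Q : ℕ → ℕ → ℝ) : Prop :=
  ∀ i j k l, i ≤ j → j ≤ n → k ≤ l → l ≤ n → 0 ≤ vol Q i j k l

section TwoIncreasing

variable {n : ℕ} {Q : ℕ → ℕ → ℝ}

theorem DiscBoundary.swap (hb : DiscBoundary n Q) : DiscBoundary n (Function.swap Q) :=
  fun i hi => ⟨(hb i hi).2.1, (hb i hi).1, (hb i hi).2.2.2, (hb i hi).2.2.1⟩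

theorem TwoIncreasing.swap (hQ : TwoIncreasing n Q) : TwoIncreasing n (Function.swap Q) :=
  fun i j k l hij hj hkl hl => vol_swap Q i j k l ▸ hQ k l i j hkl hl hij hj

theorem TwoIncreasing.mono_left (hQ : TwoIncreasing n Q) (hb : DiscBoundary n Q) {i i' j : ℕ}
    (hi : i ≤ i') (hi' : i' ≤ n) (hj : j ≤ n) : Q i j ≤ Q i' j := by
  have hvol := hQ i i' 0 j hi hi' j.zero_le hj
  rw [vol, (hb i (hi.trans hi')).1, (hb i' hi').1] at hvol
  linarith

theorem TwoIncreasing.sub_le_left (hQ : TwoIncreasing n Q) (hb : DiscBoundary n Q) {i i' j : ℕ}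
    (hi : i ≤ i') (hi' : i' ≤ n) (hj : j ≤ n) : Q i' j - Q i j ≤ i' - i := by
  have hvol := hQ i i' j n hi hi' hj le_rfl
  rw [vol, (hb i (hi.trans hi')).2.2.1, (hb i' hi').2.2.1] at hvol
  linarith

theorem TwoIncreasing.abs_sub_le_left (hQ : TwoIncreasing n Q) (hb : DiscBoundary n Q)
    {i i' j : ℕ} (hi : i ≤ n) (hi' : i' ≤ n) (hj : j ≤ n) :
    |Q i j - Q i' j| ≤ |(i : ℝ) - i'| := by
  wlog hle : i' ≤ i generalizing i i'
  · rw [abs_sub_comm, abs_sub_comm (i : ℝ)]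
    exact this hi' hi (le_of_not_ge hle)
  · rw [abs_of_nonneg (sub_nonneg.2 (hQ.mono_left hb hle hi hj))]
    exact (hQ.sub_le_left hb hle hi hj).trans (le_abs_self _)

theorem TwoIncreasing.discCopula (hQ : TwoIncreasing n Q) (hb : DiscBoundary n Q) :
    DiscCopula n Q := by
  refine ⟨⟨hb, fun _ _ _ hi hi' hj => hQ.mono_left hb hi hi' hj,
    fun _ _ _ hj hj' hi => hQ.swap.mono_left hb.swap hj hj' hi, ?_⟩, hQ⟩
  intro i i' j j' hi hi' hj hj'
  calc |Q i j - Q i' j'|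
      ≤ |Q i j - Q i' j| + |Q i' j - Q i' j'| := abs_sub_le _ _ _
    _ ≤ |(i : ℝ) - i'| + |(j : ℝ) - j'| :=
      add_le_add (hQ.abs_sub_le_left hb hi hi' hj) (hQ.swap.abs_sub_le_left hb.swap hj hj' hi')

end TwoIncreasing

theorem Qmat_eq_of_vol_unit {n : ℕ} {a F : ℕ → ℕ → ℝ} (hleft : ∀ r ≤ n, F r 0 = 0)
    (hbot : ∀ s ≤ n, F 0 s = 0)
    (hunit : ∀ r s, r < n → s < n → vol F r (r + 1) s (s + 1) = a (r + 1) (s + 1))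
    {r s : ℕ} (hr : r ≤ n) (hs : s ≤ n) : Qmat a r s = F r s := by
  have row_sum : ∀ r < n, ∑ j ∈ Icc 1 s, a (r + 1) j = F (r + 1) s - F r s := by
    intro r hr
    induction s with
    | zero => simp [hleft (r + 1) hr, hleft r hr.le]
    | succ s ih =>
      rw [sum_Icc_succ_top (by omega), ih (by omega), ← hunit r s hr hs, vol]
      ring
  induction r with
  | zero => simp [Qmat, hbot s hs]
  | succ r ih =>
    have step : Qmat a (r + 1) s = Qmat a r s + ∑ j ∈ Icc 1 s, a (r + 1) j :=
      sum_Icc_succ_top (by omega) _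
    rw [step, ih (by omega), row_sum r hr]
    ring

/-- `P ≤ C ≤ Q` pointwise on `L_n × L_n`. -/
def IsBetween (n : ℕ) (P C Q : ℕ → ℕ → ℝ) : Prop :=
  ∀ r s, r ≤ n → s ≤ n → P r s ≤ C r s ∧ C r s ≤ Q r s

/-- The pair `(P, Q)` avoids sure loss: some discrete copula lies between `P` and `Q`. -/
def AvoidsSureLoss (n : ℕ) (P Q : ℕ → ℕ → ℝ) : Prop :=
  ∃ C, DiscCopula n C ∧ IsBetween n P C Q

/-- The pair `(P, Q)` is coherent: it avoids sure loss, and `P` and `Q` are the sharp pointwise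
bounds of the discrete copulas between them. -/
def IsCoherent (n : ℕ) (P Q : ℕ → ℕ → ℝ) : Prop :=
  AvoidsSureLoss n P Q ∧ ∀ r s, r ≤ n → s ≤ n →
    IsGLB {x : ℝ | ∃ C, DiscCopula n C ∧ IsBetween n P C Q ∧ x = C r s} (P r s) ∧
    IsLUB {x : ℝ | ∃ C, DiscCopula n C ∧ IsBetween n P C Q ∧ x = C r s} (Q r s)

theorem isCoherent_of_isGLB_of_isLUB {ι : Type*} [Nonempty ι] {n : ℕ} {P Q : ℕ → ℕ → ℝ}
    {C : ι → ℕ → ℕ → ℝ} (hC : ∀ k, DiscCopula n (C k))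
    (hP : ∀ r s, r ≤ n → s ≤ n → IsGLB (Set.range fun k => C k r s) (P r s))
    (hQ : ∀ r s, r ≤ n → s ≤ n → IsLUB (Set.range fun k => C k r s) (Q r s)) :
    IsCoherent n P Q := by
  have between (k : ι) : IsBetween n P (C k) Q := fun r s hr hs =>
    ⟨(hP r s hr hs).1 (Set.mem_range_self k), (hQ r s hr hs).1 (Set.mem_range_self k)⟩
  have range_subset (r s : ℕ) : (Set.range fun k => C k r s) ⊆
      {x : ℝ | ∃ C, DiscCopula n C ∧ IsBetween n P C Q ∧ x = C r s} := by
    rintro _ ⟨k, rfl⟩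
    exact ⟨C k, hC k, between k, rfl⟩
  obtain ⟨k⟩ := ‹Nonempty ι›
  refine ⟨⟨C k, hC k, between k⟩, fun r s hr hs => ⟨⟨?_, ?_⟩, ⟨?_, ?_⟩⟩⟩
  · rintro _ ⟨D, _, hD, rfl⟩
    exact (hD r s hr hs).1
  · exact fun b hb => (hP r s hr hs).2 (lowerBounds_mono_set (range_subset r s) hb)
  · rintro _ ⟨D, _, hD, rfl⟩
    exact (hD r s hr hs).2
  · exact fun b hb => (hQ r s hr hs).2 (upperBounds_mono_set (range_subset r s) hb)

/-- The volume of the unit cell with lower corner `(r, s)` for a function of the form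
`min(r, s, g(r, s))`, where `g` takes the values `w, x, y, z` at `(r, s)`, `(r + 1, s)`,
`(r, s + 1)`, `(r + 1, s + 1)`. -/
def cappedCell (r s w x y z : ℤ) : ℤ :=
  min (min r s) w + min (min (r + 1) (s + 1)) z - min (min r (s + 1)) y - min (min (r + 1) s) x

theorem cappedCell_nonneg {r s w x y z : ℤ} (hwx : w ≤ x) (hxw : x ≤ w + 1) (hwy : w ≤ y)
    (hyw : y ≤ w + 1) (hcell : x + y ≤ w + z) : 0 ≤ cappedCell r s w x y z := by
  unfold cappedCell
  omega

theorem cappedCell_eq_ite {r s w x z : ℤ} (hwx : w ≤ x) (hxw : x ≤ w + 1) (hxz : x ≤ z)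
    (hzx : z ≤ x + 1) (hdiag : r = s → x ≤ r) :
    cappedCell r s w x x z = if x ≤ min r s then w + z - 2 * x else 0 := by
  unfold cappedCell
  split_ifs <;> omega

/-- The value on the antidiagonal `r + s = n + d`, away from the boundary, of `Q(A_n)` (at level
`i = 0`), of `Q(B_n)` (at level `i = 2`), and of an intermediate function (at level `i = 1`). It
exceeds `max 0 d` only for `-1 ≤ d ≤ 3`. -/
def profile (i d : ℤ) : ℤ :=
  max (max 0 (min (d + 2) i)) (max d (min (d + 1) (i + 2)))

theorem profile_nonneg (i d : ℤ) : 0 ≤ profile i d :=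
  (le_max_left _ _).trans (le_max_left _ _)

theorem self_le_profile (i d : ℤ) : d ≤ profile i d :=
  (le_max_left _ _).trans (le_max_right _ _)

theorem profile_monotone_level (d : ℤ) : Monotone fun i => profile i d := by
  intro i j hij
  simp only [profile]
  gcongr

theorem profile_le_profile_succ (i d : ℤ) : profile i d ≤ profile i (d + 1) := by
  unfold profile
  gcongr <;> omega

theorem profile_succ_le (i d : ℤ) : profile i (d + 1) ≤ profile i d + 1 := by
  unfold profile
  omega

section NextLevel

variable {i : ℤ}

theorem profile_le_profile_next (h0 : 0 ≤ i) (h2 : i ≤ 2) (d : ℤ) :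
    profile i d ≤ profile ((i + 1) % 3) (d + 1) := by
  unfold profile
  interval_cases i <;> omega

theorem profile_next_le (h0 : 0 ≤ i) (h2 : i ≤ 2) (d : ℤ) :
    profile ((i + 1) % 3) (d + 1) ≤ profile i d + 1 := by
  unfold profile
  interval_cases i <;> omega

theorem profile_cell_nonneg (h0 : 0 ≤ i) (h2 : i ≤ 2) (d : ℤ) :
    profile i (d + 1) + profile ((i + 1) % 3) (d + 1)
      ≤ profile i d + profile ((i + 1) % 3) (d + 2) := by
  unfold profile
  interval_cases i <;> omega

end NextLevel

theorem profile_zero_second_diff (d : ℤ) :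
    profile 0 d + profile 0 (d + 2) - 2 * profile 0 (d + 1) =
      if d = -2 then 1 else if d = 0 then -1 else if d = 1 then 1 else 0 := by
  unfold profile
  split_ifs <;> omega

theorem profile_two_second_diff (d : ℤ) :
    profile 2 d + profile 2 (d + 2) - 2 * profile 2 (d + 1) =
      if d = -3 then 1 else if d = -1 then -1 else if d = 0 then 1
      else if d = 2 then -1 else if d = 3 then 1 else 0 := by
  unfold profile
  split_ifs <;> omega

/-- The function `(r, s) ↦ min(r, s, profile i_s (r + s - n))` whose column `s` is taken at level
`i_s`. -/
noncomputable def columnProfile (n : ℕ) (i : ℕ → ℤ) (r s : ℕ) : ℝ :=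
  (min (min r s) (profile (i s) (r + s - n)) : ℤ)

section ColumnProfile

variable {n : ℕ}

theorem columnProfile_zero_right (i : ℕ → ℤ) (r : ℕ) : columnProfile n i r 0 = 0 := by
  simp [columnProfile, profile_nonneg]

theorem columnProfile_zero_left (i : ℕ → ℤ) (s : ℕ) : columnProfile n i 0 s = 0 := by
  simp [columnProfile, profile_nonneg]

theorem discBoundary_columnProfile (i : ℕ → ℤ) : DiscBoundary n (columnProfile n i) := by
  refine fun m hm => ⟨columnProfile_zero_right i m, columnProfile_zero_left i m, ?_, ?_⟩
  · simp [columnProfile, hm, self_le_profile]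
  · simp [columnProfile, hm, self_le_profile]

theorem columnProfile_le_columnProfile {i j : ℕ → ℤ} {s : ℕ} (hij : i s ≤ j s) (r : ℕ) :
    columnProfile n i r s ≤ columnProfile n j r s :=
  Int.cast_le.2 (min_le_min le_rfl (profile_monotone_level _ hij))

theorem columnProfile_min (i j : ℕ → ℤ) (r s : ℕ) :
    columnProfile n (fun s => min (i s) (j s)) r s =
      min (columnProfile n i r s) (columnProfile n j r s) := by
  rcases le_total (i s) (j s) with h | h
  · rw [min_eq_left (columnProfile_le_columnProfile h r), columnProfile, min_eq_left h,
      columnProfile]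
  · rw [min_eq_right (columnProfile_le_columnProfile h r), columnProfile, min_eq_right h,
      columnProfile]

theorem columnProfile_max (i j : ℕ → ℤ) (r s : ℕ) :
    columnProfile n (fun s => max (i s) (j s)) r s =
      max (columnProfile n i r s) (columnProfile n j r s) := by
  rcases le_total (i s) (j s) with h | h
  · rw [max_eq_right (columnProfile_le_columnProfile h r), columnProfile, max_eq_right h,
      columnProfile]
  · rw [max_eq_left (columnProfile_le_columnProfile h r), columnProfile, max_eq_left h,
      columnProfile]

theorem vol_columnProfile (i : ℕ → ℤ) (r s : ℕ) :
    vol (columnProfile n i) r (r + 1) s (s + 1) =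
      cappedCell r s (profile (i s) (r + s - n)) (profile (i s) (r + s - n + 1))
        (profile (i (s + 1)) (r + s - n + 1)) (profile (i (s + 1)) (r + s - n + 2)) := by
  have right : (r + 1 + s - n : ℤ) = r + s - n + 1 := by ring
  have up : (r + (s + 1) - n : ℤ) = r + s - n + 1 := by ring
  have diag : (r + 1 + (s + 1) - n : ℤ) = r + s - n + 2 := by ring
  simp only [vol, columnProfile, cappedCell, Nat.cast_add, Nat.cast_one, right, up, diag,
    Int.cast_add, Int.cast_sub]

theorem twoIncreasing_columnProfile {i : ℕ → ℤ} (h0 : ∀ s, 0 ≤ i s) (h2 : ∀ s, i s ≤ 2)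
    (hstep : ∀ s, i (s + 1) = (i s + 1) % 3) : TwoIncreasing n (columnProfile n i) := by
  refine fun _ _ _ _ hij hj hkl hl => vol_nonneg_of_unit (fun r s _ _ => ?_) hij hj hkl hl
  rw [vol_columnProfile, hstep]
  exact_mod_cast cappedCell_nonneg (profile_le_profile_succ _ _) (profile_succ_le _ _)
    (profile_le_profile_next (h0 s) (h2 s) _) (profile_next_le (h0 s) (h2 s) _)
    (profile_cell_nonneg (h0 s) (h2 s) _)

theorem vol_columnProfile_const (i : ℤ) {r s : ℕ}
    (hdiag : r = s → profile i (r + s - n + 1) ≤ r) :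
    vol (columnProfile n fun _ => i) r (r + 1) s (s + 1) =
      ((if profile i (r + s - n + 1) ≤ min (r : ℤ) s then
        profile i (r + s - n) + profile i (r + s - n + 2) - 2 * profile i (r + s - n + 1)
        else 0 : ℤ) : ℝ) := by
  have two : (r + s - n + 2 : ℤ) = r + s - n + 1 + 1 := by ring
  rw [vol_columnProfile, two]
  exact congrArg _ (cappedCell_eq_ite (profile_le_profile_succ _ _) (profile_succ_le _ _)
    (profile_le_profile_succ _ _) (profile_succ_le _ _) fun h => hdiag (Int.ofNat_inj.1 h))

theorem vol_columnProfile_zero (hn : 3 ≤ n) {r s : ℕ} (hr : r < n) (hs : s < n) :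
    vol (columnProfile n fun _ => 0) r (r + 1) s (s + 1) = Amat n (r + 1) (s + 1) := by
  have hdiag : r = s → profile 0 (r + s - n + 1) ≤ r := by
    unfold profile
    omega
  rw [vol_columnProfile_const 0 hdiag, profile_zero_second_diff]
  simp only [Int.cast_ite, Int.cast_one, Int.cast_neg, Int.cast_zero, Amat]
  unfold profile
  split_ifs <;> first | rfl | (exfalso; omega)

theorem vol_columnProfile_two (hn : 5 ≤ n) {r s : ℕ} (hr : r < n) (hs : s < n) :
    vol (columnProfile n fun _ => 2) r (r + 1) s (s + 1) = Bmat n (r + 1) (s + 1) := by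
  have hdiag : r = s → profile 2 (r + s - n + 1) ≤ r := by
    unfold profile
    omega
  rw [vol_columnProfile_const 2 hdiag, profile_two_second_diff]
  simp only [Int.cast_ite, Int.cast_one, Int.cast_neg, Int.cast_zero, Bmat]
  unfold profile
  split_ifs <;> first | rfl | (exfalso; omega)

end ColumnProfile

section Bounds

variable {n r s : ℕ}

theorem Qmat_Amat_eq (hn : 3 ≤ n) (hr : r ≤ n) (hs : s ≤ n) :
    Qmat (Amat n) r s = columnProfile n (fun _ => 0) r s :=
  Qmat_eq_of_vol_unit (fun r _ => columnProfile_zero_right _ r)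
    (fun s _ => columnProfile_zero_left _ s)
    (fun _ _ hr hs => vol_columnProfile_zero hn hr hs) hr hs

theorem Qmat_Bmat_eq (hn : 5 ≤ n) (hr : r ≤ n) (hs : s ≤ n) :
    Qmat (Bmat n) r s = columnProfile n (fun _ => 2) r s :=
  Qmat_eq_of_vol_unit (fun r _ => columnProfile_zero_right _ r)
    (fun s _ => columnProfile_zero_left _ s)
    (fun _ _ hr hs => vol_columnProfile_two hn hr hs) hr hs

end Bounds

/-- The copula whose column `s` is taken at level `(s + k) mod 3`. Only `k mod 3` matters, so this
is a family of three copulas. -/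
noncomputable def residueCopula (n k : ℕ) : ℕ → ℕ → ℝ :=
  columnProfile n fun s => (s + k) % 3

theorem discCopula_residueCopula (n k : ℕ) : DiscCopula n (residueCopula n k) :=
  TwoIncreasing.discCopula
    (twoIncreasing_columnProfile (fun _ => by omega) (fun _ => by omega) fun _ => by omega)
    (discBoundary_columnProfile _)

theorem columnProfile_zero_eq_min_residueCopula (n r s : ℕ) :
    columnProfile n (fun _ => 0) r s =
      min (residueCopula n 0 r s) (min (residueCopula n 1 r s) (residueCopula n 2 r s)) := by
  simp only [residueCopula, ← columnProfile_min]
  congr 1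
  funext s
  omega

theorem columnProfile_two_eq_max_residueCopula (n r s : ℕ) :
    columnProfile n (fun _ => 2) r s =
      max (residueCopula n 0 r s) (max (residueCopula n 1 r s) (residueCopula n 2 r s)) := by
  simp only [residueCopula, ← columnProfile_max]
  congr 1
  funext s
  omega

theorem isLeast_range_residueCopula (n r s : ℕ) :
    IsLeast (Set.range fun k => residueCopula n k r s) (columnProfile n (fun _ => 0) r s) := by
  refine ⟨⟨2 * s, ?_⟩, ?_⟩
  · have level : ((s + (2 * s : ℕ)) % 3 : ℤ) = 0 := by omega
    simp only [residueCopula, columnProfile, level]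
  · rintro _ ⟨k, rfl⟩
    exact columnProfile_le_columnProfile (by omega) r

theorem isGreatest_range_residueCopula (n r s : ℕ) :
    IsGreatest (Set.range fun k => residueCopula n k r s) (columnProfile n (fun _ => 2) r s) := by
  refine ⟨⟨2 * s + 2, ?_⟩, ?_⟩
  · have level : ((s + (2 * s + 2 : ℕ)) % 3 : ℤ) = 2 := by omega
    simp only [residueCopula, columnProfile, level]
  · rintro _ ⟨k, rfl⟩
    exact columnProfile_le_columnProfile (by omega) r

theorem isCoherent_Qmat_Amat_Bmat {n : ℕ} (hn : 5 ≤ n) :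
    IsCoherent n (Qmat (Amat n)) (Qmat (Bmat n)) := by
  refine isCoherent_of_isGLB_of_isLUB (discCopula_residueCopula n) ?_ ?_ <;> intro r s hr hs
  · rw [Qmat_Amat_eq (by omega) hr hs]
    exact (isLeast_range_residueCopula n r s).isGLB
  · rw [Qmat_Bmat_eq hn hr hs]
    exact (isGreatest_range_residueCopula n r s).isLUB

theorem AnBn_coherent_general (n : ℕ) (hn : 5 ≤ n) :
    (∃ C₁ C₂ C₃ : ℕ → ℕ → ℝ,
      DiscCopula n C₁ ∧ DiscCopula n C₂ ∧ DiscCopula n C₃ ∧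
      (∀ r s, r ≤ n → s ≤ n →
        Qmat (Amat n) r s = min (C₁ r s) (min (C₂ r s) (C₃ r s)) ∧
        Qmat (Bmat n) r s = max (C₁ r s) (max (C₂ r s) (C₃ r s)))) ∧
    IsCoherent n (Qmat (Amat n)) (Qmat (Bmat n)) := by
  refine ⟨⟨residueCopula n 0, residueCopula n 1, residueCopula n 2, discCopula_residueCopula n 0,
    discCopula_residueCopula n 1, discCopula_residueCopula n 2, fun r s hr hs => ⟨?_, ?_⟩⟩,
    isCoherent_Qmat_Amat_Bmat hn⟩
  · rw [Qmat_Amat_eq (by omega) hr hs, columnProfile_zero_eq_min_residueCopula]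
  · rw [Qmat_Bmat_eq hn hr hs, columnProfile_two_eq_max_residueCopula]

/-- For every `n ≥ 7`, there exist three discrete copulas `C₁, C₂, C₃`
whose pointwise min is `Q(A_n)` and pointwise max is `Q(B_n)`; consequently the
imprecise copula `(Q(A_n), Q(B_n))` avoids sure loss and is coherent. -/
theorem AnBn_coherent (n : ℕ) (hn : 7 ≤ n) :
    (∃ C₁ C₂ C₃ : ℕ → ℕ → ℝ,
      DiscCopula n C₁ ∧ DiscCopula n C₂ ∧ DiscCopula n C₃ ∧
      (∀ r s, r ≤ n → s ≤ n →
        Qmat (Amat n) r s = min (C₁ r s) (min (C₂ r s) (C₃ r s)) ∧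
        Qmat (Bmat n) r s = max (C₁ r s) (max (C₂ r s) (C₃ r s)))) ∧
    (∃ C : ℕ → ℕ → ℝ, DiscCopula n C ∧
      ∀ r s, r ≤ n → s ≤ n →
        Qmat (Amat n) r s ≤ C r s ∧ C r s ≤ Qmat (Bmat n) r s) ∧
    (∀ r s, r ≤ n → s ≤ n →
      IsGLB {x : ℝ | ∃ C : ℕ → ℕ → ℝ, DiscCopula n C ∧
          (∀ r' s', r' ≤ n → s' ≤ n →
            Qmat (Amat n) r' s' ≤ C r' s' ∧ C r' s' ≤ Qmat (Bmat n) r' s') ∧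
          x = C r s}
        (Qmat (Amat n) r s) ∧
      IsLUB {x : ℝ | ∃ C : ℕ → ℕ → ℝ, DiscCopula n C ∧
          (∀ r' s', r' ≤ n → s' ≤ n →
            Qmat (Amat n) r' s' ≤ C r' s' ∧ C r' s' ≤ Qmat (Bmat n) r' s') ∧
          x = C r s}
        (Qmat (Bmat n) r s)) :=
  AnBn_coherent_general n (by omega)
end
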